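/- For fixed T with 0 < T < 1, define E(α, T) = 1/2 + I_1(α, T) - I_2(α, T), where I_1(α,T) = ((1-T)^{(1-2α)/4}/sqrt(2)) ∫_{(1-2α)/2}^∞ ((1-T)^u - (1-T)^{-u}) / ((1 + (1-2α)/(2u))(1-T)^u + (1 - (1-2α)/(2u))(1-T)^{-u})^{3/2} du and I_2(α,T) = (ln(1-T)·(1-T)^{(1-2α)/4}/sqrt(2)) ∫_{(1-2α)/2}^∞ u / sqrt((1 + (1-2α)/(2u))(1-T)^u + (1 - (1-2α)/(2u))(1-T)^{-u}) du. Then E(α, T) - α → -2/ln(1-T) as α → ∞. -/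

import Mathlib

open Real MeasureTheory Filter

/-!
Put `L = -log (1 - T)` and `b = α - 1/2`. Up to constants both integrands are odd functions
`g u / K u ^ p` with `K u = cosh (L u) + (b / u) sinh (L u)`, so the part of the integral over
`(-b, b)` vanishes. On the remaining half-line `u = b + w`, and `K u = exp (L u) ρ`, where `ρ` lies
in `[1/2, 1]` and `(b + w) (ρ - 1) → -w / 2` as `b → ∞`. Hence `exp (L p b) / K u ^ p` is of size
`exp (-L p w)` uniformly in `b`, and dominated convergence gives the limits. In the second integral
the factor `u = b + w` multiplies `ρ ^ (-p) - 1 ≈ p w / (2 b)`, and this first-order correction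
contributes to the constant term.
-/

theorem integral_Ioi_neg_eq_integral_Ioi_of_odd {E : Type*} [NormedAddCommGroup E]
    [NormedSpace ℝ E] {f : ℝ → E} {b : ℝ} (hf : Function.Odd f)
    (hint : IntervalIntegrable f volume (-b) b) :
    ∫ u in Set.Ioi (-b), f u = ∫ u in Set.Ioi b, f u := by
  have integral_eq_neg : ∫ u in -b..b, f u = -∫ u in -b..b, f u := by
    simpa [hf.eq] using (intervalIntegral.integral_comp_neg (a := -b) (b := b) f).symm
  have integral_eq_zero : ∫ u in -b..b, f u = 0 := by
    have : IsAddTorsionFree E := .of_isTorsionFree ℝ E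
    exact self_eq_neg.mp integral_eq_neg
  by_cases htail : IntegrableOn f (Set.Ioi b)
  · rw [← intervalIntegral.integral_interval_add_Ioi' hint htail, integral_eq_zero, zero_add]
  · have htail' : ¬IntegrableOn f (Set.Ioi (-b)) := fun h ↦ htail <| by
      rcases le_total (-b) b with hb | hb
      · exact h.mono_set (Set.Ioi_subset_Ioi hb)
      · rw [← Set.Ioc_union_Ioi_eq_Ioi hb]
        exact ((intervalIntegrable_iff_integrableOn_Ioc_of_le hb).mp hint.symm).union h
    rw [integral_undef htail, integral_undef htail']

theorem integral_Ioi_comp_add_left {E : Type*} [NormedAddCommGroup E] [NormedSpace ℝ E]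
    (f : ℝ → E) (b : ℝ) : ∫ w in Set.Ioi 0, f (b + w) = ∫ u in Set.Ioi b, f u := by
  simpa using (measurePreserving_add_left volume b).setIntegral_preimage_emb
    (measurableEmbedding_addLeft b) f (Set.Ioi b)

theorem integral_exp_neg_mul_Ioi {c : ℝ} (hc : 0 < c) :
    ∫ w in Set.Ioi (0 : ℝ), exp (-(c * w)) = 1 / c := by
  simpa using integral_rpow_mul_exp_neg_mul_Ioi one_pos hc

theorem integral_mul_exp_neg_mul_Ioi {c : ℝ} (hc : 0 < c) :
    ∫ w in Set.Ioi (0 : ℝ), w * exp (-(c * w)) = 1 / c ^ 2 := by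
  simpa [show (2 : ℝ) - 1 = 1 by norm_num] using integral_rpow_mul_exp_neg_mul_Ioi two_pos hc

theorem integrableOn_exp_neg_mul_Ioi {c : ℝ} (hc : 0 < c) :
    IntegrableOn (fun w ↦ exp (-(c * w))) (Set.Ioi 0) :=
  .of_integral_ne_zero (by rw [integral_exp_neg_mul_Ioi hc]; positivity)

theorem integrableOn_mul_exp_neg_mul_Ioi {c : ℝ} (hc : 0 < c) :
    IntegrableOn (fun w ↦ w * exp (-(c * w))) (Set.Ioi 0) :=
  .of_integral_ne_zero (by rw [integral_mul_exp_neg_mul_Ioi hc]; positivity)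

theorem inv_rpow_sub_one_le {x p : ℝ} (hx : 0 < x) (hp : 0 ≤ p) :
    (x ^ p)⁻¹ - 1 ≤ (x ^ p)⁻¹ * (p * (x⁻¹ - 1)) := by
  have hxp : 0 < x ^ p := rpow_pos_of_pos hx p
  have one_sub_rpow_le : 1 - x ^ p ≤ p * (x⁻¹ - 1) := calc
    1 - x ^ p ≤ -(log x * p) := by
      rw [rpow_def_of_pos hx]; linarith [add_one_le_exp (log x * p)]
    _ = p * log x⁻¹ := by rw [log_inv]; ring
    _ ≤ p * (x⁻¹ - 1) := by gcongr; exact log_le_sub_one_of_pos (inv_pos.mpr hx)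
  calc (x ^ p)⁻¹ - 1 = (x ^ p)⁻¹ * (1 - x ^ p) := by field_simp
    _ ≤ (x ^ p)⁻¹ * (p * (x⁻¹ - 1)) :=
      mul_le_mul_of_nonneg_left one_sub_rpow_le (inv_pos.mpr hxp).le

theorem exp_neg_mul_sinh_add (x y : ℝ) :
    exp (-x) * sinh (x + y) = exp y * ((1 - exp (-(2 * (x + y)))) / 2) := by
  have h₁ : exp (-x) * exp (x + y) = exp y := by rw [← exp_add]; ring_nf
  have h₂ : exp (-x) * exp (-(x + y)) = exp y * exp (-(2 * (x + y))) := by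
    simp only [← exp_add]; ring_nf
  rw [sinh_eq]
  linear_combination (h₁ - h₂) / 2

section Kernel

variable {L b p w : ℝ}

/-- Half the denominator in the two integrals defining `E(α, T)`, before raising it to a power, in
terms of `L = -log (1 - T)` and `b = α - 1/2`. At `u = 0` it has the junk value `1` instead of the
limit `1 + b * L`. -/
noncomputable def bridgeKernel (L b u : ℝ) : ℝ := cosh (L * u) + b / u * sinh (L * u)

/-- The kernel at `u = b + w` relative to its exponential growth rate: the factor `ρ` in
`bridgeKernel L b (b + w) = exp (L * (b + w)) * ρ`. -/
noncomputable def bridgeRatio (L b w : ℝ) : ℝ := bridgeKernel L b (b + w) / exp (L * (b + w))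

theorem measurable_bridgeKernel : Measurable (bridgeKernel L b) := by
  unfold bridgeKernel; fun_prop

theorem measurable_bridgeRatio : Measurable (bridgeRatio L b) := by
  unfold bridgeRatio bridgeKernel; fun_prop

theorem even_bridgeKernel : Function.Even (bridgeKernel L b) := fun u ↦ by
  simp only [bridgeKernel, mul_neg, cosh_neg, sinh_neg, div_neg, neg_mul, neg_neg]

theorem one_le_bridgeKernel (hL : 0 ≤ L) (hb : 0 ≤ b) (u : ℝ) : 1 ≤ bridgeKernel L b u := by
  have sinh_term_nonneg : 0 ≤ b / u * sinh (L * u) := by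
    rcases le_total 0 u with hu | hu
    · exact mul_nonneg (div_nonneg hb hu) (sinh_nonneg_iff.mpr (mul_nonneg hL hu))
    · exact mul_nonneg_of_nonpos_of_nonpos (div_nonpos_of_nonneg_of_nonpos hb hu)
        (sinh_nonpos_iff.mpr (mul_nonpos_of_nonneg_of_nonpos hL hu))
  exact (one_le_cosh _).trans (le_add_of_nonneg_right sinh_term_nonneg)

theorem mul_bridgeRatio_sub_one (h : b + w ≠ 0) :
    (b + w) * (bridgeRatio L b w - 1) = -(w * (1 - exp (-(2 * L * (b + w)))) / 2) := by
  have hexp : exp (-(2 * L * (b + w))) = (exp (L * (b + w)) ^ 2)⁻¹ := by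
    rw [exp_neg, ← exp_nat_mul]; push_cast; ring_nf
  rw [bridgeRatio, bridgeKernel, cosh_eq, sinh_eq, exp_neg, hexp]
  field_simp
  ring

theorem mul_bridgeRatio_sub_one_mem_Icc (hL : 0 ≤ L) (hb : 0 ≤ b) (hw : 0 < w) :
    (b + w) * (bridgeRatio L b w - 1) ∈ Set.Icc (-(w / 2)) 0 := by
  have hexp : exp (-(2 * L * (b + w))) ≤ 1 := exp_le_one_iff.mpr (neg_nonpos.mpr (by positivity))
  rw [mul_bridgeRatio_sub_one (by positivity)]
  constructor
  · nlinarith [mul_pos hw (exp_pos (-(2 * L * (b + w))))]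
  · exact neg_nonpos.mpr (div_nonneg (mul_nonneg hw.le (sub_nonneg.mpr hexp)) two_pos.le)

theorem bridgeRatio_mem_Icc (hL : 0 ≤ L) (hb : 0 ≤ b) (hw : 0 < w) :
    bridgeRatio L b w ∈ Set.Icc (1 / 2) 1 := by
  have hbw : 0 < b + w := by positivity
  obtain ⟨lower, upper⟩ := mul_bridgeRatio_sub_one_mem_Icc hL hb hw
  constructor <;> refine le_of_mul_le_mul_left ?_ hbw <;> linarith

theorem bridgeRatio_rpow_inv_le (hL : 0 ≤ L) (hb : 0 ≤ b) (hp : 0 ≤ p) (hw : 0 < w) :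
    (bridgeRatio L b w ^ p)⁻¹ ≤ 2 ^ p := by
  have hρ := (bridgeRatio_mem_Icc hL hb hw).1
  rw [← inv_rpow (by positivity)]
  gcongr
  exact inv_le_of_inv_le₀ two_pos (by simpa using hρ)

theorem mul_bridgeRatio_rpow_inv_sub_one_mem_Icc (hL : 0 ≤ L) (hb : 0 ≤ b) (hp : 0 ≤ p)
    (hw : 0 < w) :
    (b + w) * ((bridgeRatio L b w ^ p)⁻¹ - 1) ∈ Set.Icc 0 (2 ^ p * p * w) := by
  obtain ⟨half_le, le_one⟩ := bridgeRatio_mem_Icc hL hb hw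
  have hbw : 0 < b + w := by positivity
  have hρ : 0 < bridgeRatio L b w := by linarith
  have mul_one_sub_le : (b + w) * (1 - bridgeRatio L b w) ≤ w / 2 := by
    linarith [(mul_bridgeRatio_sub_one_mem_Icc hL hb hw).1]
  have mul_inv_sub_one_le : (b + w) * ((bridgeRatio L b w)⁻¹ - 1) ≤ w := calc
    (b + w) * ((bridgeRatio L b w)⁻¹ - 1)
      = (b + w) * (1 - bridgeRatio L b w) / bridgeRatio L b w := by field_simp
    _ ≤ w / 2 / (1 / 2) := by gcongr
    _ = w := by ring
  constructor
  · exact mul_nonneg hbw.le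
      (sub_nonneg.mpr ((one_le_inv₀ (by positivity)).mpr (rpow_le_one hρ.le le_one hp)))
  · calc (b + w) * ((bridgeRatio L b w ^ p)⁻¹ - 1)
      _ ≤ (b + w) * ((bridgeRatio L b w ^ p)⁻¹ * (p * ((bridgeRatio L b w)⁻¹ - 1))) := by
        gcongr; exact inv_rpow_sub_one_le hρ hp
      _ = (bridgeRatio L b w ^ p)⁻¹ * p * ((b + w) * ((bridgeRatio L b w)⁻¹ - 1)) := by ring
      _ ≤ 2 ^ p * p * w := by
        gcongr
        · exact mul_nonneg hbw.le (sub_nonneg.mpr ((one_le_inv₀ hρ).mpr le_one))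
        · exact bridgeRatio_rpow_inv_le hL hb hp hw

theorem bridgeKernel_rpow_eq (hL : 0 ≤ L) (hb : 0 ≤ b) (p w : ℝ) :
    bridgeKernel L b (b + w) ^ p = exp (L * p * (b + w)) * bridgeRatio L b w ^ p := by
  have hK : 0 ≤ bridgeKernel L b (b + w) := zero_le_one.trans (one_le_bridgeKernel hL hb _)
  rw [bridgeRatio, div_rpow hK (exp_pos _).le, mul_right_comm, exp_mul,
    mul_div_cancel₀ _ (by positivity)]

theorem intervalIntegrable_div_bridgeKernel_rpow {g : ℝ → ℝ} (hg : Continuous g) (hL : 0 ≤ L)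
    (hb : 0 ≤ b) (hp : 0 ≤ p) (x y : ℝ) :
    IntervalIntegrable (fun u ↦ g u / bridgeKernel L b u ^ p) volume x y := by
  refine (hg.intervalIntegrable x y).mono_fun
    (hg.measurable.div (measurable_bridgeKernel.pow_const p)).aestronglyMeasurable (.of_forall ?_)
  intro u
  have one_le : 1 ≤ bridgeKernel L b u ^ p := one_le_rpow (one_le_bridgeKernel hL hb u) hp
  simp only [norm_div, norm_of_nonneg (zero_le_one.trans one_le)]
  exact div_le_self (norm_nonneg _) one_le

theorem exp_mul_integral_div_bridgeKernel_rpow {g : ℝ → ℝ} (hg : Continuous g)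
    (hodd : Function.Odd g) (hL : 0 ≤ L) (hb : 0 ≤ b) (hp : 0 ≤ p) :
    exp (L * p * b) * ∫ u in Set.Ioi (-b), g u / bridgeKernel L b u ^ p =
      ∫ w in Set.Ioi 0, exp (-(L * p * w)) * (g (b + w) / bridgeRatio L b w ^ p) := by
  have odd_integrand : Function.Odd fun u ↦ g u / bridgeKernel L b u ^ p := fun u ↦ by
    simp only [hodd u, even_bridgeKernel u, neg_div]
  rw [integral_Ioi_neg_eq_integral_Ioi_of_odd odd_integrand
    (intervalIntegrable_div_bridgeKernel_rpow hg hL hb hp _ _), ← integral_Ioi_comp_add_left,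
    ← integral_const_mul]
  congr 1 with w
  rw [bridgeKernel_rpow_eq hL hb, mul_add, exp_add, exp_neg]
  field_simp

theorem tendsto_exp_neg_mul_add_atTop (hL : 0 < L) (w : ℝ) :
    Tendsto (fun b ↦ exp (-(2 * L * (b + w)))) atTop (nhds 0) :=
  tendsto_exp_neg_atTop_nhds_zero.comp <|
    (tendsto_atTop_add_const_right _ w tendsto_id).const_mul_atTop (by positivity)

theorem tendsto_mul_bridgeRatio_sub_one (hL : 0 < L) (w : ℝ) :
    Tendsto (fun b ↦ (b + w) * (bridgeRatio L b w - 1)) atTop (nhds (-(w / 2))) := by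
  have h : Tendsto (fun b ↦ -(w * (1 - exp (-(2 * L * (b + w)))) / 2)) atTop (nhds (-(w / 2))) := by
    simpa using ((((tendsto_exp_neg_mul_add_atTop hL w).const_sub 1).const_mul w).div_const 2).neg
  refine h.congr' ?_
  filter_upwards [eventually_gt_atTop (-w)] with b hb
  exact (mul_bridgeRatio_sub_one (by linarith)).symm

theorem tendsto_bridgeRatio (hL : 0 < L) (w : ℝ) :
    Tendsto (fun b ↦ bridgeRatio L b w) atTop (nhds 1) := by
  have h := (tendsto_mul_bridgeRatio_sub_one hL w).div_atTop
    (tendsto_atTop_add_const_right _ w tendsto_id)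
  have h' := h.add_const 1
  rw [zero_add] at h'
  refine h'.congr' ?_
  filter_upwards [eventually_gt_atTop (-w)] with b hb
  have hbw : b + w ≠ 0 := by linarith
  simp only [id_eq]
  rw [mul_div_cancel_left₀ _ hbw, sub_add_cancel]

theorem tendsto_bridgeRatio_rpow_inv (hL : 0 < L) (p w : ℝ) :
    Tendsto (fun b ↦ (bridgeRatio L b w ^ p)⁻¹) atTop (nhds 1) := by
  simpa using ((tendsto_bridgeRatio hL w).rpow_const (p := p) (.inl one_ne_zero)).inv₀ (by simp)

theorem tendsto_mul_bridgeRatio_rpow_inv_sub_one (hL : 0 < L) (p w : ℝ) :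
    Tendsto (fun b ↦ (b + w) * ((bridgeRatio L b w ^ p)⁻¹ - 1)) atTop (nhds (p * w / 2)) := by
  have hderiv : HasDerivAt (fun x : ℝ ↦ (x ^ p)⁻¹) (-p) 1 := by
    simpa [Pi.inv_def] using (hasDerivAt_rpow_const (p := p) (.inl one_ne_zero)).inv (by simp)
  have hsub : Tendsto (fun b ↦ bridgeRatio L b w - 1) atTop (nhds 0) := by
    simpa using (tendsto_bridgeRatio hL w).sub_const 1
  have h := hderiv.hasFDerivAt.hasFDerivWithinAt.lim hsub (s := Set.univ) (by simp)
    (tendsto_mul_bridgeRatio_sub_one hL w)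
  convert h using 2 <;> simp
  ring

/-- The integrand in `w = u - b` of the integral of `sinh (L * u) / bridgeKernel L b u ^ p`,
rescaled by `exp (L * (p - 1) * b)`. -/
noncomputable def bridgeSinhIntegrand (L p b w : ℝ) : ℝ :=
  exp (-(L * (p - 1) * w)) * ((1 - exp (-(2 * L * (b + w)))) / 2 * (bridgeRatio L b w ^ p)⁻¹)

/-- The integrand in `w = u - b` of the integral of `u / bridgeKernel L b u ^ p`, rescaled by
`exp (L * p * b)` and with its leading term `b * exp (-(L * p * w))` removed. -/
noncomputable def bridgeIdRemainder (L p b w : ℝ) : ℝ :=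
  exp (-(L * p * w)) * (w + (b + w) * ((bridgeRatio L b w ^ p)⁻¹ - 1))

theorem measurable_bridgeSinhIntegrand : Measurable (bridgeSinhIntegrand L p b) := by
  have := measurable_bridgeRatio (L := L) (b := b)
  unfold bridgeSinhIntegrand; fun_prop

theorem measurable_bridgeIdRemainder : Measurable (bridgeIdRemainder L p b) := by
  have := measurable_bridgeRatio (L := L) (b := b)
  unfold bridgeIdRemainder; fun_prop

theorem norm_bridgeSinhIntegrand_le (hL : 0 ≤ L) (hb : 0 ≤ b) (hp : 0 ≤ p) (hw : 0 < w) :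
    ‖bridgeSinhIntegrand L p b w‖ ≤ 2 ^ p * exp (-(L * (p - 1) * w)) := by
  have exp_le_one : exp (-(2 * L * (b + w))) ≤ 1 :=
    exp_le_one_iff.mpr (neg_nonpos.mpr (by positivity))
  have hρ : 0 < bridgeRatio L b w := one_half_pos.trans_le (bridgeRatio_mem_Icc hL hb hw).1
  have half_nonneg : 0 ≤ (1 - exp (-(2 * L * (b + w)))) / 2 := by linarith
  have half_le_one : (1 - exp (-(2 * L * (b + w)))) / 2 ≤ 1 := by
    linarith [exp_pos (-(2 * L * (b + w)))]
  rw [bridgeSinhIntegrand, norm_of_nonneg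
    (mul_nonneg (exp_pos _).le (mul_nonneg half_nonneg (by positivity))), mul_comm]
  gcongr
  calc (1 - exp (-(2 * L * (b + w)))) / 2 * (bridgeRatio L b w ^ p)⁻¹
    _ ≤ 1 * 2 ^ p := by gcongr; exact bridgeRatio_rpow_inv_le hL hb hp hw
    _ = 2 ^ p := one_mul _

theorem norm_bridgeIdRemainder_le (hL : 0 ≤ L) (hb : 0 ≤ b) (hp : 0 ≤ p) (hw : 0 < w) :
    ‖bridgeIdRemainder L p b w‖ ≤ (1 + 2 ^ p * p) * (w * exp (-(L * p * w))) := by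
  obtain ⟨nonneg, le⟩ := mul_bridgeRatio_rpow_inv_sub_one_mem_Icc hL hb hp hw
  rw [bridgeIdRemainder, norm_of_nonneg (by positivity)]
  calc exp (-(L * p * w)) * (w + (b + w) * ((bridgeRatio L b w ^ p)⁻¹ - 1))
    _ ≤ exp (-(L * p * w)) * (w + 2 ^ p * p * w) := by gcongr
    _ = (1 + 2 ^ p * p) * (w * exp (-(L * p * w))) := by ring

theorem tendsto_bridgeSinhIntegrand (hL : 0 < L) (p w : ℝ) :
    Tendsto (fun b ↦ bridgeSinhIntegrand L p b w) atTop
      (nhds (exp (-(L * (p - 1) * w)) * (1 / 2))) := by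
  simpa [bridgeSinhIntegrand] using
    ((((tendsto_exp_neg_mul_add_atTop hL w).const_sub 1).div_const 2).mul
      (tendsto_bridgeRatio_rpow_inv hL p w)).const_mul (exp (-(L * (p - 1) * w)))

theorem tendsto_bridgeIdRemainder (hL : 0 < L) (p w : ℝ) :
    Tendsto (fun b ↦ bridgeIdRemainder L p b w) atTop
      (nhds (exp (-(L * p * w)) * (w + p * w / 2))) :=
  ((tendsto_mul_bridgeRatio_rpow_inv_sub_one hL p w).const_add w).const_mul _

theorem exp_mul_integral_sinh_div_bridgeKernel_rpow (hL : 0 ≤ L) (hb : 0 ≤ b) (hp : 0 ≤ p) :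
    exp (L * (p - 1) * b) * ∫ u in Set.Ioi (-b), sinh (L * u) / bridgeKernel L b u ^ p =
      ∫ w in Set.Ioi 0, bridgeSinhIntegrand L p b w := by
  rw [show L * (p - 1) * b = -(L * b) + L * p * b by ring, exp_add, mul_assoc,
    exp_mul_integral_div_bridgeKernel_rpow (g := fun u ↦ sinh (L * u)) (by fun_prop)
      (fun u ↦ by simp only [mul_neg, sinh_neg]) hL hb hp, ← integral_const_mul]
  congr 1 with w
  rw [bridgeSinhIntegrand, mul_add L b w]
  calc exp (-(L * b)) * (exp (-(L * p * w)) * (sinh (L * b + L * w) / bridgeRatio L b w ^ p))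
    _ = exp (-(L * p * w)) * (exp (-(L * b)) * sinh (L * b + L * w)) *
        (bridgeRatio L b w ^ p)⁻¹ := by ring
    _ = exp (-(L * p * w)) * exp (L * w) *
        ((1 - exp (-(2 * (L * b + L * w)))) / 2 * (bridgeRatio L b w ^ p)⁻¹) := by
      rw [exp_neg_mul_sinh_add]; ring
    _ = _ := by rw [← exp_add]; ring_nf

theorem exp_mul_integral_id_div_bridgeKernel_rpow (hL : 0 < L) (hb : 0 ≤ b) (hp : 0 < p) :
    exp (L * p * b) * (∫ u in Set.Ioi (-b), u / bridgeKernel L b u ^ p) - b / (L * p) =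
      ∫ w in Set.Ioi 0, bridgeIdRemainder L p b w := by
  have hc : 0 < L * p := mul_pos hL hp
  have integrableOn_remainder : IntegrableOn (bridgeIdRemainder L p b) (Set.Ioi 0) :=
    ((integrableOn_mul_exp_neg_mul_Ioi hc).const_mul (1 + 2 ^ p * p)).mono'
      measurable_bridgeIdRemainder.aestronglyMeasurable <|
      (ae_restrict_mem measurableSet_Ioi).mono fun _ ↦ norm_bridgeIdRemainder_le hL.le hb hp.le
  rw [exp_mul_integral_div_bridgeKernel_rpow (g := fun u ↦ u) continuous_id (fun _ ↦ rfl) hL.le hb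
    hp.le, sub_eq_iff_eq_add, div_eq_mul_one_div b, ← integral_exp_neg_mul_Ioi hc,
    ← integral_const_mul, ← integral_add integrableOn_remainder
      ((integrableOn_exp_neg_mul_Ioi hc).const_mul b)]
  congr 1 with w
  rw [bridgeIdRemainder]
  ring

theorem tendsto_exp_mul_integral_sinh_div_bridgeKernel_rpow (hL : 0 < L) (hp : 1 < p) :
    Tendsto (fun b ↦ exp (L * (p - 1) * b) *
        ∫ u in Set.Ioi (-b), sinh (L * u) / bridgeKernel L b u ^ p)
      atTop (nhds (1 / (2 * (L * (p - 1))))) := by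
  have hc : 0 < L * (p - 1) := mul_pos hL (sub_pos.mpr hp)
  have hp₀ : 0 ≤ p := zero_le_one.trans hp.le
  have integral_limit : ∫ w in Set.Ioi (0 : ℝ), exp (-(L * (p - 1) * w)) * (1 / 2) =
      1 / (2 * (L * (p - 1))) := by
    rw [integral_mul_const, integral_exp_neg_mul_Ioi hc, one_div_mul_one_div, mul_comm]
  rw [← integral_limit]
  refine Tendsto.congr' ((eventually_ge_atTop 0).mono fun b hb ↦
    (exp_mul_integral_sinh_div_bridgeKernel_rpow hL.le hb hp₀).symm) ?_
  refine tendsto_integral_filter_of_dominated_convergence _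
    (.of_forall fun b ↦ measurable_bridgeSinhIntegrand.aestronglyMeasurable) ?_
    ((integrableOn_exp_neg_mul_Ioi hc).const_mul (2 ^ p))
    (.of_forall (tendsto_bridgeSinhIntegrand hL p))
  filter_upwards [eventually_ge_atTop 0] with b hb
  filter_upwards [ae_restrict_mem measurableSet_Ioi] with w hw
  exact norm_bridgeSinhIntegrand_le hL.le hb hp₀ hw

theorem tendsto_exp_mul_integral_id_div_bridgeKernel_rpow (hL : 0 < L) (hp : 0 < p) :
    Tendsto (fun b ↦ exp (L * p * b) *
        (∫ u in Set.Ioi (-b), u / bridgeKernel L b u ^ p) - b / (L * p))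
      atTop (nhds ((1 + p / 2) / (L * p) ^ 2)) := by
  have hc : 0 < L * p := mul_pos hL hp
  have integral_limit : ∫ w in Set.Ioi (0 : ℝ), exp (-(L * p * w)) * (w + p * w / 2) =
      (1 + p / 2) / (L * p) ^ 2 := by
    rw [div_eq_mul_one_div, ← integral_mul_exp_neg_mul_Ioi hc, ← integral_const_mul]
    congr 1 with w
    ring
  rw [← integral_limit]
  refine Tendsto.congr' ((eventually_ge_atTop 0).mono fun b hb ↦
    (exp_mul_integral_id_div_bridgeKernel_rpow hL hb hp).symm) ?_
  refine tendsto_integral_filter_of_dominated_convergence _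
    (.of_forall fun b ↦ measurable_bridgeIdRemainder.aestronglyMeasurable) ?_
    ((integrableOn_mul_exp_neg_mul_Ioi hc).const_mul (1 + 2 ^ p * p))
    (.of_forall (tendsto_bridgeIdRemainder hL p))
  filter_upwards [eventually_ge_atTop 0] with b hb
  filter_upwards [ae_restrict_mem measurableSet_Ioi] with w hw
  exact norm_bridgeIdRemainder_le hL.le hb hp.le hw

end Kernel

section ExpectedEstimator

variable {ℓ α : ℝ}

/-- The term `I₁(α, T)` of the expected estimator, with `ℓ = log (1 - T)`. -/
noncomputable def estimatorFirstTerm (ℓ α : ℝ) : ℝ :=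
  exp ((1 - 2 * α) / 4 * ℓ) / √2 *
    ∫ u in Set.Ioi ((1 - 2 * α) / 2), (exp (u * ℓ) - exp (-u * ℓ)) /
      ((1 + (1 - 2 * α) / (2 * u)) * exp (u * ℓ) +
        (1 - (1 - 2 * α) / (2 * u)) * exp (-u * ℓ)) ^ ((3 : ℝ) / 2)

/-- The term `I₂(α, T)` of the expected estimator, with `ℓ = log (1 - T)`. -/
noncomputable def estimatorSecondTerm (ℓ α : ℝ) : ℝ :=
  ℓ * exp ((1 - 2 * α) / 4 * ℓ) / √2 *
    ∫ u in Set.Ioi ((1 - 2 * α) / 2), u /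
      √((1 + (1 - 2 * α) / (2 * u)) * exp (u * ℓ) + (1 - (1 - 2 * α) / (2 * u)) * exp (-u * ℓ))

theorem estimator_denominator_eq (ℓ α u : ℝ) :
    (1 + (1 - 2 * α) / (2 * u)) * exp (u * ℓ) + (1 - (1 - 2 * α) / (2 * u)) * exp (-u * ℓ) =
      2 * bridgeKernel (-ℓ) (α - 1 / 2) u := by
  have hquot : (1 - 2 * α) / (2 * u) = -((α - 1 / 2) / u) := by
    rw [← mul_div_mul_left (α - 1 / 2) u two_ne_zero]; ring
  rw [hquot, bridgeKernel, cosh_eq, sinh_eq]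
  ring_nf

theorem estimatorFirstTerm_eq (hℓ : ℓ ≤ 0) (hα : 1 / 2 ≤ α) :
    estimatorFirstTerm ℓ α =
      -(1 / 2) * (exp (-ℓ * (3 / 2 - 1) * (α - 1 / 2)) *
        ∫ u in Set.Ioi (-(α - 1 / 2)),
          sinh (-ℓ * u) / bridgeKernel (-ℓ) (α - 1 / 2) u ^ ((3 : ℝ) / 2)) := by
  have two_rpow : (2 : ℝ) ^ ((3 : ℝ) / 2) = 2 * √2 := by
    rw [sqrt_eq_rpow, ← rpow_one_add' two_pos.le (by norm_num)]; norm_num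
  have integrand_eq (u : ℝ) : (exp (u * ℓ) - exp (-u * ℓ)) /
      (2 * bridgeKernel (-ℓ) (α - 1 / 2) u) ^ ((3 : ℝ) / 2) =
      -(1 / √2) * (sinh (-ℓ * u) / bridgeKernel (-ℓ) (α - 1 / 2) u ^ ((3 : ℝ) / 2)) := by
    have hK := one_le_bridgeKernel (neg_nonneg.mpr hℓ) (sub_nonneg.mpr hα) u
    rw [mul_rpow two_pos.le (zero_le_one.trans hK), two_rpow, sinh_eq]
    field_simp
    ring_nf
  simp_rw [estimatorFirstTerm, estimator_denominator_eq, integrand_eq]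
  rw [integral_const_mul, show (1 - 2 * α) / 2 = -(α - 1 / 2) by ring,
    show (1 - 2 * α) / 4 * ℓ = -ℓ * (3 / 2 - 1) * (α - 1 / 2) by ring]
  have := sq_sqrt (two_pos (α := ℝ)).le
  field_simp
  rw [this]

theorem estimatorSecondTerm_eq (ℓ α : ℝ) :
    estimatorSecondTerm ℓ α =
      ℓ / 2 * (exp (-ℓ * (1 / 2) * (α - 1 / 2)) *
        ∫ u in Set.Ioi (-(α - 1 / 2)),
          u / bridgeKernel (-ℓ) (α - 1 / 2) u ^ ((1 : ℝ) / 2)) := by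
  have integrand_eq (u : ℝ) : u / √(2 * bridgeKernel (-ℓ) (α - 1 / 2) u) =
      1 / √2 * (u / bridgeKernel (-ℓ) (α - 1 / 2) u ^ ((1 : ℝ) / 2)) := by
    rw [sqrt_mul two_pos.le, ← sqrt_eq_rpow]; ring
  simp_rw [estimatorSecondTerm, estimator_denominator_eq, integrand_eq]
  rw [integral_const_mul, show (1 - 2 * α) / 2 = -(α - 1 / 2) by ring,
    show (1 - 2 * α) / 4 * ℓ = -ℓ * (1 / 2) * (α - 1 / 2) by ring]
  have := sq_sqrt (two_pos (α := ℝ)).le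
  field_simp
  rw [this]

theorem tendsto_estimatorFirstTerm (hℓ : ℓ < 0) :
    Tendsto (estimatorFirstTerm ℓ) atTop (nhds (1 / (2 * ℓ))) := by
  have shift : Tendsto (fun α : ℝ ↦ α - 1 / 2) atTop atTop :=
    tendsto_atTop_add_const_right _ _ tendsto_id
  have h := ((tendsto_exp_mul_integral_sinh_div_bridgeKernel_rpow (p := 3 / 2)
    (neg_pos.mpr hℓ) (by norm_num)).comp shift).const_mul (-(1 / 2))
  rw [show 1 / (2 * ℓ) = -(1 / 2) * (1 / (2 * (-ℓ * (3 / 2 - 1)))) by field_simp; norm_num]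
  exact h.congr' <| (eventually_ge_atTop (1 / 2)).mono fun α hα ↦
    (estimatorFirstTerm_eq hℓ.le hα).symm

theorem tendsto_estimatorSecondTerm_add (hℓ : ℓ < 0) :
    Tendsto (fun α ↦ estimatorSecondTerm ℓ α + (α - 1 / 2)) atTop (nhds (5 / (2 * ℓ))) := by
  have shift : Tendsto (fun α : ℝ ↦ α - 1 / 2) atTop atTop :=
    tendsto_atTop_add_const_right _ _ tendsto_id
  have h := ((tendsto_exp_mul_integral_id_div_bridgeKernel_rpow (p := 1 / 2)
    (neg_pos.mpr hℓ) (by norm_num)).comp shift).const_mul (ℓ / 2)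
  rw [show 5 / (2 * ℓ) = ℓ / 2 * ((1 + 1 / 2 / 2) / (-ℓ * (1 / 2)) ^ 2) by field_simp; norm_num]
  refine h.congr fun α ↦ ?_
  have leading_term : ℓ / 2 * ((α - 1 / 2) / (-ℓ * (1 / 2))) = -(α - 1 / 2) := by
    have := hℓ.ne
    field_simp
  rw [Function.comp_apply, mul_sub, leading_term, sub_neg_eq_add, estimatorSecondTerm_eq]

end ExpectedEstimator

theorem stmt_11 (T : ℝ) (hT0 : 0 < T) (hT1 : T < 1)
    (I₁ I₂ : ℝ → ℝ)
    (hI₁ : ∀ α : ℝ, I₁ α =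
      (Real.exp ((1 - 2*α)/4 * Real.log (1 - T)) / Real.sqrt 2) *
        ∫ u in Set.Ioi ((1 - 2*α)/2),
          (Real.exp (u * Real.log (1 - T)) - Real.exp (-u * Real.log (1 - T))) /
            ((1 + (1 - 2*α)/(2*u)) * Real.exp (u * Real.log (1 - T)) +
             (1 - (1 - 2*α)/(2*u)) * Real.exp (-u * Real.log (1 - T))) ^ ((3:ℝ)/2))
    (hI₂ : ∀ α : ℝ, I₂ α =
      (Real.log (1 - T) * Real.exp ((1 - 2*α)/4 * Real.log (1 - T)) / Real.sqrt 2) *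
        ∫ u in Set.Ioi ((1 - 2*α)/2),
          u / Real.sqrt
            ((1 + (1 - 2*α)/(2*u)) * Real.exp (u * Real.log (1 - T)) +
             (1 - (1 - 2*α)/(2*u)) * Real.exp (-u * Real.log (1 - T)))) :
    Filter.Tendsto (fun α : ℝ => (1/2 + I₁ α - I₂ α) - α)
      Filter.atTop (nhds (-2 / Real.log (1 - T))) := by
  obtain rfl : I₁ = estimatorFirstTerm (log (1 - T)) := funext hI₁
  obtain rfl : I₂ = estimatorSecondTerm (log (1 - T)) := funext hI₂
  have hlog : log (1 - T) < 0 := log_neg (by linarith) (by linarith)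
  rw [show -2 / log (1 - T) = 1 / (2 * log (1 - T)) - 5 / (2 * log (1 - T)) by ring]
  refine ((tendsto_estimatorFirstTerm hlog).sub (tendsto_estimatorSecondTerm_add hlog)).congr ?_
  intro α
  ring
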